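/- Let X be a strictly stable random variable with parameters (ν, θ, τ). Then E[(log|X|)⁴] = τ⁴ + 6τ²·DV + 8τ·ζ(3)(ν^{3/2} − 1) + 3·DV² + π⁴((1 − θ⁴)/8 + (ν² − 1)/15). -/

import Mathlib

open MeasureTheory ProbabilityTheory

/-- The real value of the Riemann zeta function at a real argument. -/
noncomputable def zetaR (s : ℝ) : ℝ := (riemannZeta (s : ℂ)).re

/-- A real random variable `X` is strictly stable with parameters `(ν, θ, τ)` if
`ν ≥ 1/4`, `|θ| ≤ min 1 (2√ν − 1)`, `P(X = 0) = 0`, `log |X|` has finite absolute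
moments of every order, and the characteristic function of `X` is
`E[exp(i k X)] = exp(−exp(ν^{−1/2}(log|k| + τ − i(π/2)θ sign k) + C(ν^{−1/2} − 1)))`
for all real `k ≠ 0`, where `C` is the Euler–Mascheroni constant. -/
def IsStrictlyStable {Ω : Type*} [MeasureSpace Ω] (X : Ω → ℝ) (ν θ τ : ℝ) : Prop :=
  Measurable X ∧ (1/4 : ℝ) ≤ ν ∧ |θ| ≤ min 1 (2 * Real.sqrt ν - 1) ∧
  (ℙ : Measure Ω) {ω | X ω = 0} = 0 ∧
  (∀ p : ℕ, Integrable (fun ω => (abs (Real.log (abs (X ω)))) ^ p)) ∧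
  ∀ k : ℝ, k ≠ 0 →
    (∫ ω, Complex.exp (Complex.I * (k : ℂ) * (X ω : ℂ))) =
      Complex.exp (-Complex.exp
        (((ν ^ (-(1/2) : ℝ) : ℝ) : ℂ) *
            (((Real.log |k| : ℝ) : ℂ) + (τ : ℂ) -
              Complex.I * ((Real.pi / 2 : ℝ) : ℂ) * (θ : ℂ) * ((Real.sign k : ℝ) : ℂ)) +
          ((Real.eulerMascheroniConstant : ℝ) : ℂ) * (((ν ^ (-(1/2) : ℝ) : ℝ) : ℂ) - 1)))

/-!
For small `s > 0`, integrating `1 - Re E[exp (i k X)]` against `k ^ (-s - 1)` over `(0, ∞)` gives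
an explicit multiple of `E|X|^s`. The characteristic function of `X` has the form
`exp (-(w * k ^ α))` with `α = ν ^ (-1/2)` and `Re w ≥ 0`, so the same integral is also a value of
the continued Mellin transform of `exp`. Comparing the two,
`E|X|^s = exp (τ s) * (Γ(1 - √ν s) e^(-γ √ν s)) / (Γ(1 - s) e^(-γ s)) * cos (πθs/2) / cos (πs/2)`.
The Taylor coefficients of `log Γ(1 - s)` are zeta values, and the reflection formula expresses
`log (cos (πs/2))` through `log Γ`; this yields the cumulants `κₙ` of `log |X|`. The moments of
`log |X|` are the derivatives at `0` of the exponential of the cumulant series, because dominated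
convergence identifies them with the limits as `s → 0+` of the derivatives of `E|X|^s`. The fourth
one is `κ₄ + 4 κ₃ κ₁ + 3 κ₂² + 6 κ₂ κ₁² + κ₁⁴`.
-/

open Filter Topology Set

section MellinOneSubExp

variable {s w z : ℂ}

lemma norm_one_sub_exp_neg_le (hz : 0 ≤ z.re) : ‖1 - Complex.exp (-z)‖ ≤ 2 * min ‖z‖ 1 := by
  rcases le_total ‖z‖ 1 with h | h
  · rw [min_eq_left h, norm_sub_rev]
    simpa using Complex.norm_exp_sub_one_le (x := -z) (by simpa using h)
  · have hexp : ‖Complex.exp (-z)‖ ≤ 1 := by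
      rw [Complex.norm_exp]
      simpa using hz
    rw [min_eq_right h]
    calc ‖1 - Complex.exp (-z)‖ ≤ ‖(1 : ℂ)‖ + ‖Complex.exp (-z)‖ := norm_sub_le _ _
      _ ≤ 2 * 1 := by rw [norm_one]; linarith

lemma integrableOn_rpow_sub_one_mul_min_one {σ : ℝ} (hσ₁ : -1 < σ) (hσ₀ : σ < 0) :
    IntegrableOn (fun u : ℝ ↦ u ^ (σ - 1) * min u 1) (Ioi 0) := by
  rw [← Ioc_union_Ioi_eq_Ioi zero_le_one]
  refine IntegrableOn.union ?_ ?_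
  · have hint : IntegrableOn (fun u : ℝ ↦ u ^ σ) (Ioc 0 1) :=
      (intervalIntegrable_iff_integrableOn_Ioc_of_le zero_le_one).1
        (intervalIntegral.intervalIntegrable_rpow' hσ₁)
    refine hint.congr_fun (fun u hu ↦ ?_) measurableSet_Ioc
    simp only [min_eq_left hu.2, Real.rpow_sub_one hu.1.ne', div_mul_cancel₀ _ hu.1.ne']
  · refine (integrableOn_Ioi_rpow_of_lt (a := σ - 1) (by linarith) one_pos).congr_fun
      (fun u hu ↦ ?_) measurableSet_Ioi
    simp only [min_eq_right (mem_Ioi.1 hu).le, mul_one]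

lemma norm_cpow_smul_one_sub_exp_neg_mul_le {u : ℝ} (hw : 0 ≤ w.re) (hu : 0 < u) :
    ‖(u : ℂ) ^ (s - 1) • (1 - Complex.exp (-(w * u)))‖ ≤
      2 * (‖w‖ + 1) * (u ^ (s.re - 1) * min u 1) := by
  have hwu : min ‖w * u‖ 1 ≤ (‖w‖ + 1) * min u 1 := by
    rw [norm_mul, Complex.norm_of_nonneg hu.le]
    rcases le_total u 1 with h | h
    · rw [min_eq_left h]
      exact (min_le_left _ _).trans (by linarith)
    · rw [min_eq_right h]
      exact (min_le_right _ _).trans (by linarith [norm_nonneg w])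
  have hre : 0 ≤ (w * u).re := by
    rw [Complex.re_mul_ofReal]
    positivity
  calc ‖(u : ℂ) ^ (s - 1) • (1 - Complex.exp (-(w * u)))‖
      = u ^ (s.re - 1) * ‖1 - Complex.exp (-(w * u))‖ := by
        rw [norm_smul, Complex.norm_cpow_eq_rpow_re_of_pos hu, Complex.sub_re, Complex.one_re]
    _ ≤ u ^ (s.re - 1) * (2 * ((‖w‖ + 1) * min u 1)) := by
        gcongr
        exact (norm_one_sub_exp_neg_le hre).trans (by gcongr)
    _ = 2 * (‖w‖ + 1) * (u ^ (s.re - 1) * min u 1) := by ring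

lemma aestronglyMeasurable_cpow_smul_one_sub_exp_neg_mul (s w : ℂ) :
    AEStronglyMeasurable (fun u : ℝ ↦ (u : ℂ) ^ (s - 1) • (1 - Complex.exp (-(w * u))))
      (volume.restrict (Ioi 0)) :=
  Measurable.aestronglyMeasurable (by fun_prop)

lemma mellinConvergent_one_sub_exp_neg_mul (hs₁ : -1 < s.re) (hs₀ : s.re < 0) (hw : 0 ≤ w.re) :
    MellinConvergent (fun u : ℝ ↦ 1 - Complex.exp (-(w * u))) s := by
  refine ((integrableOn_rpow_sub_one_mul_min_one hs₁ hs₀).const_mul (2 * (‖w‖ + 1))).mono'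
    (aestronglyMeasurable_cpow_smul_one_sub_exp_neg_mul s w) ?_
  filter_upwards [ae_restrict_mem measurableSet_Ioi] with u hu
  exact norm_cpow_smul_one_sub_exp_neg_mul_le hw hu

lemma hasDerivAt_mellin_one_sub_exp_neg_mul (hs₁ : -1 < s.re) (hs₀ : s.re < 0) (hw : 0 < w.re) :
    HasDerivAt (fun w ↦ mellin (fun u : ℝ ↦ 1 - Complex.exp (-(w * u))) s)
      (mellin (fun u : ℝ ↦ Complex.exp (-(w * u))) (s + 1)) w := by
  have hnhds : {z : ℂ | w.re / 2 < z.re} ∈ 𝓝 w :=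
    (isOpen_lt continuous_const Complex.continuous_re).mem_nhds (half_lt_self hw)
  refine (hasDerivAt_integral_of_dominated_loc_of_deriv_le
    (F' := fun (z : ℂ) (u : ℝ) ↦ (u : ℂ) ^ (s + 1 - 1) • Complex.exp (-(z * u)))
    (bound := fun u ↦ u ^ s.re * Real.exp (-(w.re / 2) * u)) hnhds
    (.of_forall (aestronglyMeasurable_cpow_smul_one_sub_exp_neg_mul s))
    (mellinConvergent_one_sub_exp_neg_mul hs₁ hs₀ hw.le)
    (Measurable.aestronglyMeasurable (by fun_prop)) ?_ ?_ ?_).2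
  · filter_upwards [ae_restrict_mem measurableSet_Ioi] with u (hu : 0 < u) z (hz : w.re / 2 < z.re)
    rw [norm_smul, Complex.norm_cpow_eq_rpow_re_of_pos hu, Complex.norm_exp, add_sub_cancel_right,
      Complex.neg_re, Complex.re_mul_ofReal, neg_mul]
    gcongr
  · have hint := integrableOn_rpow_mul_exp_neg_mul_rpow hs₁ one_pos (half_pos hw)
    simp only [Real.rpow_one] at hint
    exact hint
  · filter_upwards [ae_restrict_mem measurableSet_Ioi] with u (hu : 0 < u) z _
    have hexp : HasDerivAt (fun z : ℂ ↦ 1 - Complex.exp (-(z * u)))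
        (u * Complex.exp (-(z * u))) z := by
      have hlin : HasDerivAt (fun z : ℂ ↦ -(z * u)) (-(1 * u)) z :=
        ((hasDerivAt_id z).mul_const (u : ℂ)).neg
      exact (hlin.cexp.const_sub 1).congr_deriv (by ring)
    refine (hexp.const_mul ((u : ℂ) ^ (s - 1))).congr_deriv ?_
    rw [add_sub_cancel_right, smul_eq_mul, ← mul_assoc,
      Complex.cpow_sub _ _ (Complex.ofReal_ne_zero.2 hu.ne'), Complex.cpow_one,
      div_mul_cancel₀ _ (Complex.ofReal_ne_zero.2 hu.ne')]

lemma mellin_one_sub_exp_neg_ofReal_mul {r : ℝ} (hr : 0 < r) :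
    mellin (fun u : ℝ ↦ 1 - Complex.exp (-(r * u))) s =
      (r : ℂ) ^ (-s) * mellin (fun u : ℝ ↦ 1 - Complex.exp (-u)) s := by
  simpa using mellin_comp_mul_left (fun u : ℝ ↦ 1 - Complex.exp (-u)) s hr

-- By scaling the transform at `r` is `r ^ (-s)` times the one at `1`; compare `r`-derivatives.
lemma mellin_one_sub_exp_neg (hs₁ : -1 < s.re) (hs₀ : s.re < 0) :
    mellin (fun u : ℝ ↦ 1 - Complex.exp (-u)) s = -Complex.Gamma s := by
  have hs : s ≠ 0 := by
    rintro rfl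
    simp at hs₀
  set M := mellin (fun u : ℝ ↦ 1 - Complex.exp (-u)) s
  have hGamma : mellin (fun u : ℝ ↦ Complex.exp (-(((1 : ℝ) : ℂ) * u))) (s + 1) =
      s * Complex.Gamma s := by
    rw [← Complex.Gamma_add_one s hs, Complex.Gamma_eq_integral (by simp; linarith),
      Complex.GammaIntegral_eq_mellin]
    simp
  have hderiv : HasDerivAt (fun r : ℝ ↦ (r : ℂ) ^ (-s) * M) (-s * M) 1 := by
    simpa using (hasDerivAt_ofReal_cpow_const one_ne_zero (neg_ne_zero.2 hs)).mul_const M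
  have hscale : (fun r : ℝ ↦ mellin (fun u : ℝ ↦ 1 - Complex.exp (-((r : ℂ) * u))) s) =ᶠ[𝓝 1]
      fun r : ℝ ↦ (r : ℂ) ^ (-s) * M := by
    filter_upwards [lt_mem_nhds one_pos] with r hr
    exact mellin_one_sub_exp_neg_ofReal_mul hr
  have heq := ((hasDerivAt_mellin_one_sub_exp_neg_mul hs₁ hs₀
    (w := ((1 : ℝ) : ℂ)) (by simp)).comp_ofReal).unique (hderiv.congr_of_eventuallyEq hscale)
  rw [hGamma] at heq
  exact mul_left_cancel₀ hs (by linear_combination heq)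

lemma mellin_one_sub_exp_neg_mul_of_re_pos (hs₁ : -1 < s.re) (hs₀ : s.re < 0) (hw : 0 < w.re) :
    mellin (fun u : ℝ ↦ 1 - Complex.exp (-(w * u))) s = -(Complex.Gamma s * w ^ (-s)) := by
  have hopen : IsOpen {z : ℂ | 0 < z.re} := isOpen_lt continuous_const Complex.continuous_re
  have hmellin : AnalyticOnNhd ℂ (fun w ↦ mellin (fun u : ℝ ↦ 1 - Complex.exp (-(w * u))) s)
      {z : ℂ | 0 < z.re} :=
    DifferentiableOn.analyticOnNhd (fun z hz ↦ (hasDerivAt_mellin_one_sub_exp_neg_mul hs₁ hs₀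
      hz).differentiableAt.differentiableWithinAt) hopen
  have hcpow : AnalyticOnNhd ℂ (fun w : ℂ ↦ -(Complex.Gamma s * w ^ (-s))) {z : ℂ | 0 < z.re} :=
    DifferentiableOn.analyticOnNhd (fun z hz ↦ ((differentiableAt_id.cpow_const
      (Or.inl hz)).const_mul _).neg.differentiableWithinAt) hopen
  have hreal : ∃ᶠ r : ℝ in 𝓝[>] 1, mellin (fun u : ℝ ↦ 1 - Complex.exp (-((r : ℂ) * u))) s =
      -(Complex.Gamma s * (r : ℂ) ^ (-s)) := by
    refine Eventually.frequently ?_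
    filter_upwards [self_mem_nhdsWithin] with r (hr : 1 < r)
    rw [mellin_one_sub_exp_neg_ofReal_mul (one_pos.trans hr), mellin_one_sub_exp_neg hs₁ hs₀]
    ring
  have hofReal : Tendsto ((↑) : ℝ → ℂ) (𝓝[>] 1) (𝓝[≠] 1) := by
    refine tendsto_nhdsWithin_iff.2 ⟨?_, ?_⟩
    · exact (Complex.continuous_ofReal.tendsto' 1 1 Complex.ofReal_one).mono_left
        nhdsWithin_le_nhds
    · filter_upwards [self_mem_nhdsWithin] with r (hr : 1 < r)
      simpa using hr.ne'
  exact hmellin.eqOn_of_preconnected_of_frequently_eq hcpow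
    (convex_halfSpace_re_gt 0).isPreconnected (z₀ := 1) (by simp) (hofReal.frequently hreal) hw

lemma continuousOn_mellin_one_sub_exp_neg_mul (hs₁ : -1 < s.re) (hs₀ : s.re < 0) :
    ContinuousOn (fun w ↦ mellin (fun u : ℝ ↦ 1 - Complex.exp (-(w * u))) s) {w | 0 ≤ w.re} := by
  intro w _
  refine continuousWithinAt_of_dominated
    (bound := fun u ↦ 2 * (‖w‖ + 1 + 1) * (u ^ (s.re - 1) * min u 1))
    (.of_forall (aestronglyMeasurable_cpow_smul_one_sub_exp_neg_mul s)) ?_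
    ((integrableOn_rpow_sub_one_mul_min_one hs₁ hs₀).const_mul _)
    (.of_forall fun u ↦ Continuous.continuousWithinAt (by fun_prop))
  filter_upwards [self_mem_nhdsWithin, mem_nhdsWithin_of_mem_nhds (Metric.ball_mem_nhds w one_pos)]
    with z (hz : 0 ≤ z.re) hzw
  filter_upwards [ae_restrict_mem measurableSet_Ioi] with u (hu : 0 < u)
  refine (norm_cpow_smul_one_sub_exp_neg_mul_le hz hu).trans ?_
  have hnorm : ‖z‖ ≤ ‖w‖ + 1 := by
    have hball : ‖z - w‖ < 1 := mem_ball_iff_norm.1 hzw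
    linarith [norm_sub_norm_le z w]
  gcongr

lemma continuousOn_cpow_const_of_re_pos (hs : 0 < s.re) :
    ContinuousOn (fun w : ℂ ↦ w ^ s) {w | 0 ≤ w.re} := by
  intro w (hw : 0 ≤ w.re)
  refine ContinuousAt.continuousWithinAt ?_
  rcases eq_or_ne w 0 with rfl | hw₀
  · exact (Complex.continuousAt_cpow_zero_of_re_pos hs).comp
      (f := fun w : ℂ ↦ (w, s)) (by fun_prop)
  · exact continuousAt_id.cpow continuousAt_const
      (hw.lt_or_eq.imp_right fun h him ↦ hw₀ (Complex.ext h.symm him))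

lemma hasMellin_one_sub_exp_neg_mul (hs₁ : -1 < s.re) (hs₀ : s.re < 0) (hw : 0 ≤ w.re) :
    HasMellin (fun u : ℝ ↦ 1 - Complex.exp (-(w * u))) s (-(Complex.Gamma s * w ^ (-s))) := by
  refine ⟨mellinConvergent_one_sub_exp_neg_mul hs₁ hs₀ hw, ?_⟩
  have hcpow : ContinuousOn (fun w : ℂ ↦ -(Complex.Gamma s * w ^ (-s))) {w | 0 ≤ w.re} :=
    ((continuousOn_cpow_const_of_re_pos (by simpa using hs₀)).const_mul _).neg
  exact EqOn.of_subset_closure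
    (fun z hz ↦ mellin_one_sub_exp_neg_mul_of_re_pos hs₁ hs₀ hz)
    (continuousOn_mellin_one_sub_exp_neg_mul hs₁ hs₀) hcpow (fun z (hz : 0 < z.re) ↦ hz.le)
    (Complex.closure_setOfPred_lt_re 0).ge hw

end MellinOneSubExp

section AbsoluteMoments

variable {s w m : ℂ} {p σ α : ℝ} {μ : Measure ℝ}

lemma re_ofReal_cpow_ofReal_sub_one_smul {u : ℝ} (hu : 0 ≤ u) (σ : ℝ) (z : ℂ) :
    ((u : ℂ) ^ ((σ : ℂ) - 1) • z).re = u ^ (σ - 1) * z.re := by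
  rw [← Complex.ofReal_one, ← Complex.ofReal_sub, ← Complex.ofReal_cpow hu, smul_eq_mul,
    Complex.re_ofReal_mul]

lemma integrableOn_rpow_mul_re_of_hasMellin {f : ℝ → ℂ} (hf : HasMellin f σ m) :
    IntegrableOn (fun u : ℝ ↦ u ^ (σ - 1) * (f u).re) (Ioi 0) :=
  IntegrableOn.congr_fun (Integrable.re hf.1)
    (fun _ hu ↦ re_ofReal_cpow_ofReal_sub_one_smul (mem_Ioi.1 hu).le σ _) measurableSet_Ioi

lemma integral_rpow_mul_re_of_hasMellin {f : ℝ → ℂ} (hf : HasMellin f σ m) :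
    ∫ u in Ioi (0 : ℝ), u ^ (σ - 1) * (f u).re = m.re := by
  rw [← hf.2, mellin]
  refine Eq.trans ?_ (integral_re hf.1)
  exact setIntegral_congr_fun measurableSet_Ioi
    fun u hu ↦ (re_ofReal_cpow_ofReal_sub_one_smul (mem_Ioi.1 hu).le σ _).symm

lemma re_one_sub_exp_neg_abs_mul_I_mul (x u : ℝ) :
    (1 - Complex.exp (-((|x| : ℝ) * Complex.I * u))).re = 1 - Real.cos (u * x) := by
  have harg : -((|x| : ℝ) * Complex.I * (u : ℂ)) = ((-(|x| * u) : ℝ) : ℂ) * Complex.I := by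
    push_cast
    ring
  rw [harg, Complex.sub_re, Complex.one_re, Complex.exp_ofReal_mul_I_re, Real.cos_neg,
    mul_comm u x]
  rcases abs_choice x with h | h <;> rw [h]
  rw [neg_mul, Real.cos_neg]

lemma re_abs_mul_I_cpow (hp : 0 < p) (x : ℝ) :
    (((|x| : ℝ) * Complex.I) ^ (p : ℂ)).re = |x| ^ p * Real.cos (Real.pi / 2 * p) := by
  rcases eq_or_ne x 0 with rfl | hx
  · simp [Real.zero_rpow hp.ne', hp.ne']
  · rw [Complex.cpow_ofReal_re, Complex.arg_real_mul _ (abs_pos.2 hx), Complex.arg_I]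
    simp

lemma hasMellin_one_sub_exp_neg_abs_mul_I_mul (hp₀ : 0 < p) (hp₁ : p < 1) (x : ℝ) :
    HasMellin (fun u : ℝ ↦ 1 - Complex.exp (-((|x| : ℝ) * Complex.I * u))) ((-p : ℝ) : ℂ)
      (-(Real.Gamma (-p) * ((|x| : ℝ) * Complex.I) ^ (p : ℂ))) := by
  have h := hasMellin_one_sub_exp_neg_mul (s := ((-p : ℝ) : ℂ)) (w := (|x| : ℝ) * Complex.I)
    (by simpa using hp₁) (by simpa using hp₀) (by simp)
  rwa [Complex.Gamma_ofReal, ← Complex.ofReal_neg, neg_neg] at h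

lemma integral_rpow_mul_one_sub_cos (hp₀ : 0 < p) (hp₁ : p < 1) (x : ℝ) :
    ∫ k in Ioi (0 : ℝ), k ^ (-p - 1) * (1 - Real.cos (k * x)) =
      -(Real.Gamma (-p) * Real.cos (Real.pi / 2 * p)) * |x| ^ p := by
  have h := integral_rpow_mul_re_of_hasMellin (hasMellin_one_sub_exp_neg_abs_mul_I_mul hp₀ hp₁ x)
  simp only [re_one_sub_exp_neg_abs_mul_I_mul] at h
  rw [h, Complex.neg_re, Complex.re_ofReal_mul, re_abs_mul_I_cpow hp₀]
  ring

lemma Gamma_neg_mul_cos_ne_zero (hp₀ : 0 < p) (hp₁ : p < 1) :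
    Real.Gamma (-p) * Real.cos (Real.pi / 2 * p) ≠ 0 := by
  refine mul_ne_zero (Real.Gamma_ne_zero fun n hn ↦ ?_) (Real.cos_pos_of_mem_Ioo ⟨?_, ?_⟩).ne'
  · have hpn : p = n := by linarith
    rw [hpn] at hp₀ hp₁
    norm_cast at hp₀ hp₁
    omega
  · nlinarith [Real.pi_pos]
  · nlinarith [Real.pi_pos]

lemma integrable_cos_mul [IsFiniteMeasure μ] (k : ℝ) : Integrable (fun x ↦ Real.cos (k * x)) μ :=
  .of_bound (Measurable.aestronglyMeasurable (by fun_prop)) 1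
    (.of_forall fun x ↦ Real.abs_cos_le_one (k * x))

lemma re_charFun_eq_integral_cos [IsFiniteMeasure μ] (k : ℝ) :
    (charFun μ k).re = ∫ x, Real.cos (k * x) ∂μ := by
  have hint : Integrable (fun x : ℝ ↦ Complex.exp (k * x * Complex.I)) μ := by
    refine .of_bound (Measurable.aestronglyMeasurable (by fun_prop)) 1 (.of_forall fun x ↦ ?_)
    rw [← Complex.ofReal_mul, Complex.norm_exp_ofReal_mul_I]
  rw [charFun_apply_real]
  refine (integral_re hint).symm.trans (integral_congr_ae (.of_forall fun x ↦ ?_))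
  change (Complex.exp (k * x * Complex.I)).re = _
  rw [← Complex.ofReal_mul, Complex.exp_ofReal_mul_I_re]

lemma integrable_one_sub_cos_mul [IsFiniteMeasure μ] (k : ℝ) :
    Integrable (fun x ↦ 1 - Real.cos (k * x)) μ :=
  (integrable_const 1).sub (integrable_cos_mul k)

lemma integral_one_sub_cos_mul [IsFiniteMeasure μ] (k : ℝ) :
    ∫ x, (1 - Real.cos (k * x)) ∂μ = μ.real univ - (charFun μ k).re := by
  rw [integral_sub (integrable_const _) (integrable_cos_mul k),
    re_charFun_eq_integral_cos]
  simp

lemma integrable_prod_rpow_mul_one_sub_cos [IsFiniteMeasure μ]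
    (hint : IntegrableOn (fun k ↦ k ^ (-p - 1) * (μ.real univ - (charFun μ k).re)) (Ioi 0)) :
    Integrable (fun q : ℝ × ℝ ↦ q.1 ^ (-p - 1) * (1 - Real.cos (q.1 * q.2)))
      ((volume.restrict (Ioi 0)).prod μ) := by
  refine (integrable_prod_iff (Measurable.aestronglyMeasurable (by fun_prop))).2
    ⟨.of_forall fun k ↦ (integrable_one_sub_cos_mul k).const_mul (k ^ (-p - 1)), ?_⟩
  refine IntegrableOn.congr_fun hint (fun k (hk : 0 < k) ↦ ?_) measurableSet_Ioi
  rw [← integral_one_sub_cos_mul, ← integral_const_mul]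
  refine integral_congr_ae (.of_forall fun x ↦ (Real.norm_of_nonneg ?_).symm)
  exact mul_nonneg (Real.rpow_nonneg hk.le _) (sub_nonneg.2 (Real.cos_le_one _))

lemma integrable_abs_rpow_of_integrableOn_charFun [IsFiniteMeasure μ] (hp₀ : 0 < p) (hp₁ : p < 1)
    (hint : IntegrableOn (fun k ↦ k ^ (-p - 1) * (μ.real univ - (charFun μ k).re)) (Ioi 0)) :
    Integrable (fun x ↦ |x| ^ p) μ := by
  have h := (integrable_prod_rpow_mul_one_sub_cos hint).integral_prod_right
  simp only [integral_rpow_mul_one_sub_cos hp₀ hp₁] at h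
  exact (integrable_const_mul_iff
    (neg_ne_zero.2 (Gamma_neg_mul_cos_ne_zero hp₀ hp₁)).isUnit _).1 h

lemma integral_rpow_mul_one_sub_re_charFun [IsFiniteMeasure μ] (hp₀ : 0 < p) (hp₁ : p < 1)
    (hint : IntegrableOn (fun k ↦ k ^ (-p - 1) * (μ.real univ - (charFun μ k).re)) (Ioi 0)) :
    ∫ k in Ioi (0 : ℝ), k ^ (-p - 1) * (μ.real univ - (charFun μ k).re) =
      -(Real.Gamma (-p) * Real.cos (Real.pi / 2 * p)) * ∫ x, |x| ^ p ∂μ := by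
  have hswap := integral_integral_swap (f := fun k x ↦ k ^ (-p - 1) * (1 - Real.cos (k * x)))
    (integrable_prod_rpow_mul_one_sub_cos hint)
  simpa only [integral_const_mul, integral_one_sub_cos_mul,
    integral_rpow_mul_one_sub_cos hp₀ hp₁] using hswap

lemma hasMellin_one_sub_exp_neg_mul_rpow (hα : 0 < α) (hs₁ : -α < s.re) (hs₀ : s.re < 0)
    (hw : 0 ≤ w.re) :
    HasMellin (fun u : ℝ ↦ 1 - Complex.exp (-(w * (u ^ α : ℝ)))) s
      (α⁻¹ * -(Complex.Gamma (s / α) * w ^ (-(s / α)))) := by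
  have hre : (s / α).re = s.re / α := Complex.div_ofReal_re s α
  have h := hasMellin_one_sub_exp_neg_mul (s := s / α) (w := w)
    (by rw [hre, lt_div_iff₀ hα]; linarith) (by rw [hre]; exact div_neg_of_neg_of_pos hs₀ hα) hw
  refine ⟨(MellinConvergent.comp_rpow hα.ne').2 h.1, ?_⟩
  rw [mellin_comp_rpow (fun u : ℝ ↦ 1 - Complex.exp (-(w * u))), h.2, abs_of_pos hα,
    Complex.real_smul, Complex.ofReal_inv]

lemma hasMellin_one_sub_charFun_of_eq_exp_neg_mul_rpow (hw : 0 ≤ w.re) (hp₀ : 0 < p) (hpα : p < α)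
    (hμ : ∀ k : ℝ, 0 < k → charFun μ k = Complex.exp (-(w * (k ^ α : ℝ)))) :
    HasMellin (fun k ↦ 1 - charFun μ k) ((-p : ℝ) : ℂ)
      (α⁻¹ * -(Real.Gamma (-p / α) * w ^ ((p / α : ℝ) : ℂ))) := by
  have h := hasMellin_one_sub_exp_neg_mul_rpow (s := ((-p : ℝ) : ℂ)) (hp₀.trans hpα)
    (by simpa using hpα) (by simpa using hp₀) hw
  rw [← Complex.ofReal_div, Complex.Gamma_ofReal, ← Complex.ofReal_neg, ← neg_div, neg_neg] at h
  have hcongr : EqOn (fun k : ℝ ↦ (k : ℂ) ^ (((-p : ℝ) : ℂ) - 1) •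
      (1 - Complex.exp (-(w * (k ^ α : ℝ))))) (fun k : ℝ ↦ (k : ℂ) ^ (((-p : ℝ) : ℂ) - 1) •
      (1 - charFun μ k)) (Ioi 0) := fun k hk ↦ by simp only [hμ k hk]
  exact ⟨IntegrableOn.congr_fun h.1 hcongr measurableSet_Ioi,
    (setIntegral_congr_fun measurableSet_Ioi hcongr).symm.trans h.2⟩

variable [IsProbabilityMeasure μ]

lemma integrable_abs_rpow_of_charFun_eq_exp_neg_mul_rpow (hw : 0 ≤ w.re) (hp₀ : 0 < p)
    (hp₁ : p < 1) (hpα : p < α)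
    (hμ : ∀ k : ℝ, 0 < k → charFun μ k = Complex.exp (-(w * (k ^ α : ℝ)))) :
    Integrable (fun x ↦ |x| ^ p) μ :=
  integrable_abs_rpow_of_integrableOn_charFun hp₀ hp₁ <| by
    simpa using integrableOn_rpow_mul_re_of_hasMellin
      (hasMellin_one_sub_charFun_of_eq_exp_neg_mul_rpow hw hp₀ hpα hμ)

lemma integral_abs_rpow_of_charFun_eq_exp_neg_mul_rpow (hw : 0 ≤ w.re) (hp₀ : 0 < p)
    (hp₁ : p < 1) (hpα : p < α)
    (hμ : ∀ k : ℝ, 0 < k → charFun μ k = Complex.exp (-(w * (k ^ α : ℝ)))) :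
    Real.Gamma (1 - p) * Real.cos (Real.pi / 2 * p) * ∫ x, |x| ^ p ∂μ =
      Real.Gamma (1 - p / α) * (w ^ ((p / α : ℝ) : ℂ)).re := by
  have hα : 0 < α := hp₀.trans hpα
  have hmellin := hasMellin_one_sub_charFun_of_eq_exp_neg_mul_rpow hw hp₀ hpα hμ
  have hmoment := integral_rpow_mul_one_sub_re_charFun (μ := μ) hp₀ hp₁
    (by simpa using integrableOn_rpow_mul_re_of_hasMellin hmellin)
  have hre := integral_rpow_mul_re_of_hasMellin hmellin
  simp only [Complex.sub_re, Complex.one_re] at hre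
  rw [probReal_univ, hre, Complex.re_ofReal_mul, Complex.neg_re,
    Complex.re_ofReal_mul] at hmoment
  have hΓ : Real.Gamma (1 - p) = -p * Real.Gamma (-p) := by
    rw [← Real.Gamma_add_one (neg_ne_zero.2 hp₀.ne'), neg_add_eq_sub]
  have hΓα : Real.Gamma (1 - p / α) = -p / α * Real.Gamma (-p / α) := by
    rw [← Real.Gamma_add_one (div_ne_zero (neg_ne_zero.2 hp₀.ne') hα.ne'), neg_div,
      neg_add_eq_sub]
  rw [hΓ, hΓα]
  linear_combination -(p : ℝ) * hmoment

end AbsoluteMoments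

lemma hasSum_one_div_nat_add_one_pow_zetaR {k : ℕ} (hk : 1 < k) :
    HasSum (fun m : ℕ ↦ 1 / ((m : ℝ) + 1) ^ k) (zetaR k) := by
  have hsum : Summable fun m : ℕ ↦ 1 / (m : ℝ) ^ k := Real.summable_one_div_nat_pow.2 hk
  have hzeta : zetaR k = ∑' m : ℕ, 1 / (m : ℝ) ^ k := by
    rw [zetaR, Complex.ofReal_natCast, zeta_nat_eq_tsum_of_gt_one hk,
      ← Complex.ofReal_re (∑' m : ℕ, 1 / (m : ℝ) ^ k), Complex.ofReal_tsum]
    push_cast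
    rfl
  have hshift := (hasSum_nat_add_iff' 1).2 (hzeta ▸ hsum.hasSum)
  simpa [(zero_lt_one.trans hk).ne'] using hshift

lemma zetaR_two : zetaR 2 = Real.pi ^ 2 / 6 := by
  rw [zetaR, Complex.ofReal_ofNat, riemannZeta_two]
  norm_cast

lemma zetaR_four : zetaR 4 = Real.pi ^ 4 / 90 := by
  rw [zetaR, Complex.ofReal_ofNat, riemannZeta_four]
  norm_cast

/-- The function `log Γ(1 - x) - γ x`, which is `log Γ(1 - x)` without the linear term of its
Taylor expansion at `0`. -/
noncomputable def logGammaTail (x : ℝ) : ℝ :=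
  Real.log (Real.Gamma (1 - x)) - Real.eulerMascheroniConstant * x

section LogGammaTail

variable {x : ℝ}

lemma exp_logGammaTail (hx : x < 1) :
    Real.exp (logGammaTail x) =
      Real.Gamma (1 - x) * Real.exp (-(Real.eulerMascheroniConstant * x)) := by
  rw [logGammaTail, sub_eq_add_neg, Real.exp_add,
    Real.exp_log (Real.Gamma_pos_of_pos (sub_pos.2 hx))]

lemma tendsto_logGammaSeq_log_Gamma (hx : 0 < x) :
    Tendsto (Real.BohrMollerup.logGammaSeq x) atTop (𝓝 (Real.log (Real.Gamma x))) := by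
  have hfeq {y : ℝ} (hy : 0 < y) :
      (Real.log ∘ Real.Gamma) (y + 1) = (Real.log ∘ Real.Gamma) y + Real.log y := by
    rw [Function.comp_apply, Function.comp_apply, Real.Gamma_add_one hy.ne',
      Real.log_mul hy.ne' (Real.Gamma_pos_of_pos hy).ne', add_comm]
  simpa using Real.BohrMollerup.tendsto_logGammaSeq Real.convexOn_log_Gamma hfeq hx

lemma div_nat_add_one_lt_one (hx : x < 1) (m : ℕ) : x / ((m : ℝ) + 1) < 1 := by
  rw [div_lt_one (by positivity)]
  linarith [(m.cast_nonneg : (0 : ℝ) ≤ m)]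

lemma log_one_sub_add_nat (hx : x < 1) (m : ℕ) :
    Real.log (1 - x + m) = Real.log ((m : ℝ) + 1) + Real.log (1 - x / ((m : ℝ) + 1)) := by
  have hm : (m : ℝ) + 1 ≠ 0 := by positivity
  rw [← Real.log_mul hm (sub_pos.2 (div_nat_add_one_lt_one hx m)).ne', mul_sub, mul_one,
    mul_div_cancel₀ _ hm]
  ring_nf

lemma sum_range_log_add_one (n : ℕ) :
    ∑ m ∈ Finset.range n, Real.log ((m : ℝ) + 1) = Real.log n.factorial := by
  rw [← Real.log_prod fun m _ ↦ by positivity, ← Finset.prod_range_add_one_eq_factorial]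
  push_cast
  rfl

lemma sum_range_neg_log_sub_eq_logGammaSeq (hx : x < 1) (n : ℕ) :
    ∑ m ∈ Finset.range (n + 1), (-Real.log (1 - x / ((m : ℝ) + 1)) - x / ((m : ℝ) + 1)) =
      Real.BohrMollerup.logGammaSeq (1 - x) n + (1 - x) * (Real.log (n + 1) - Real.log n) -
        x * ((harmonic (n + 1) : ℝ) - Real.log ((n + 1 : ℕ) : ℝ)) := by
  have hharmonic : x * (harmonic (n + 1) : ℝ) =
      ∑ m ∈ Finset.range (n + 1), x / ((m : ℝ) + 1) := by
    simp [harmonic, Finset.mul_sum, div_eq_mul_inv]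
  have hfactorial : Real.log (n + 1).factorial = Real.log (n + 1) + Real.log n.factorial := by
    rw [Nat.factorial_succ, Nat.cast_mul, Real.log_mul (by positivity) (by positivity)]
    push_cast
    rfl
  simp only [Real.BohrMollerup.logGammaSeq, log_one_sub_add_nat hx, Finset.sum_add_distrib,
    Finset.sum_sub_distrib, Finset.sum_neg_distrib, sum_range_log_add_one, hfactorial, mul_sub,
    hharmonic]
  push_cast
  ring

lemma hasSum_neg_log_sub_logGammaTail (hx : x < 1) :
    HasSum (fun m : ℕ ↦ -Real.log (1 - x / ((m : ℝ) + 1)) - x / ((m : ℝ) + 1))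
      (logGammaTail x) := by
  have hnonneg (m : ℕ) : 0 ≤ -Real.log (1 - x / ((m : ℝ) + 1)) - x / ((m : ℝ) + 1) := by
    linarith [Real.log_le_sub_one_of_pos (sub_pos.2 (div_nat_add_one_lt_one hx m))]
  rw [hasSum_iff_tendsto_nat_of_nonneg hnonneg, ← tendsto_add_atTop_iff_nat 1]
  simp only [sum_range_neg_log_sub_eq_logGammaSeq hx]
  have hlog : Tendsto (fun n : ℕ ↦ Real.log (n + 1) - Real.log n) atTop (𝓝 0) :=
    Real.tendsto_log_nat_add_one_sub_log
  have hharmonic := Real.tendsto_harmonic_sub_log.comp (tendsto_add_atTop_nat 1)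
  have hlim := ((tendsto_logGammaSeq_log_Gamma (sub_pos.2 hx)).add (hlog.const_mul (1 - x))).sub
    (hharmonic.const_mul x)
  rw [mul_zero, add_zero, mul_comm x] at hlim
  exact hlim

lemma hasSum_pow_div_neg_log_one_sub_sub (hx : |x| < 1) :
    HasSum (fun n : ℕ ↦ x ^ (n + 2) / ((n + 2 : ℕ) : ℝ)) (-Real.log (1 - x) - x) := by
  simpa [add_assoc, one_add_one_eq_two] using
    (hasSum_nat_add_iff' 1).2 (Real.hasSum_pow_div_log_of_abs_lt_one hx)

lemma summable_pow_div_mul_one_div_pow (hx : |x| < 1) :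
    Summable fun q : ℕ × ℕ ↦
      x ^ (q.1 + 2) / ((q.1 + 2 : ℕ) : ℝ) * (1 / ((q.2 : ℝ) + 1) ^ (q.1 + 2)) := by
  have hgeom := summable_geometric_of_lt_one (abs_nonneg x) hx
  have hzeta := (hasSum_one_div_nat_add_one_pow_zetaR one_lt_two).summable
  refine .of_norm_bounded (hgeom.mul_of_nonneg hzeta (fun n ↦ by positivity)
    (fun m ↦ by positivity)) fun ⟨n, m⟩ ↦ ?_
  rw [norm_mul, norm_div, norm_pow, Real.norm_eq_abs, Real.norm_natCast, Real.norm_of_nonneg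
    (by positivity)]
  have hm : (1 : ℝ) ≤ (m : ℝ) + 1 := by simp
  gcongr ?_ * (1 / ?_)
  · calc |x| ^ (n + 2) / ((n + 2 : ℕ) : ℝ) ≤ |x| ^ (n + 2) :=
        div_le_self (by positivity) (by exact_mod_cast (by omega : 1 ≤ n + 2))
      _ ≤ |x| ^ n := pow_le_pow_of_le_one (abs_nonneg x) hx.le (by omega)
  · exact pow_le_pow_right₀ hm (by omega)

-- Expand each summand of `hasSum_neg_log_sub_logGammaTail` and interchange the two sums.
lemma hasSum_logGammaTail (hx : |x| < 1) :
    HasSum (fun n : ℕ ↦ zetaR (n + 2 : ℕ) / ((n + 2 : ℕ) : ℝ) * x ^ (n + 2))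
      (logGammaTail x) := by
  obtain ⟨S, hS⟩ := summable_pow_div_mul_one_div_pow hx
  have hrows : HasSum (fun n : ℕ ↦ x ^ (n + 2) / ((n + 2 : ℕ) : ℝ) * zetaR (n + 2 : ℕ)) S :=
    hS.prod_fiberwise fun n ↦ (hasSum_one_div_nat_add_one_pow_zetaR (by omega)).mul_left _
  have hcols : HasSum (fun m : ℕ ↦ -Real.log (1 - x / ((m : ℝ) + 1)) - x / ((m : ℝ) + 1)) S := by
    refine ((Equiv.prodComm ℕ ℕ).hasSum_iff.2 hS).prod_fiberwise fun m ↦ ?_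
    have hm : |x / ((m : ℝ) + 1)| < 1 := by
      rw [abs_div, abs_of_pos (by positivity : 0 < (m : ℝ) + 1)]
      exact div_nat_add_one_lt_one hx m
    convert hasSum_pow_div_neg_log_one_sub_sub hm using 2 with n
    simp only [Function.comp_apply, Equiv.prodComm_apply, Prod.fst_swap, Prod.snd_swap, div_pow]
    ring
  rw [(hasSum_neg_log_sub_logGammaTail (abs_lt.1 hx).2).unique hcols]
  convert hrows using 2
  ring

lemma Gamma_one_add_mul_Gamma_one_sub_mul_sin (hx : |x| < 1) :
    Real.Gamma (1 + x) * Real.Gamma (1 - x) * Real.sin (Real.pi * x) = Real.pi * x := by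
  rcases eq_or_ne x 0 with rfl | hx₀
  · simp
  have hsin : Real.sin (Real.pi * x) ≠ 0 := by
    rw [mul_comm, Real.sin_ne_zero_iff]
    rintro n hn
    have hnx : (n : ℝ) = x := mul_right_cancel₀ Real.pi_ne_zero hn
    rw [← hnx] at hx hx₀
    exact hx₀ (by exact_mod_cast Int.abs_lt_one_iff.1 (by exact_mod_cast hx))
  rw [add_comm, Real.Gamma_add_one hx₀, mul_assoc x, Real.Gamma_mul_Gamma_one_sub, mul_assoc,
    div_mul_cancel₀ _ hsin, mul_comm]

-- The reflection formula at `x` and at `x / 2`, combined with `sin (2 y) = 2 sin y cos y`.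
lemma Gamma_one_add_mul_Gamma_one_sub_mul_cos (hx : |x| < 1) :
    Real.Gamma (1 + x) * Real.Gamma (1 - x) * Real.cos (Real.pi / 2 * x) =
      Real.Gamma (1 + x / 2) * Real.Gamma (1 - x / 2) := by
  rcases eq_or_ne x 0 with rfl | hx₀
  · simp
  have hhalf : |x / 2| < 1 := by
    rw [abs_div, abs_two]
    linarith
  have hreflect := Gamma_one_add_mul_Gamma_one_sub_mul_sin hx
  have hreflect_half := Gamma_one_add_mul_Gamma_one_sub_mul_sin hhalf
  have hsin : Real.sin (Real.pi * (x / 2)) ≠ 0 := fun h ↦ by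
    rw [h, mul_zero] at hreflect_half
    exact mul_ne_zero Real.pi_ne_zero (div_ne_zero hx₀ two_ne_zero) hreflect_half.symm
  have hdouble : Real.sin (Real.pi * x) =
      2 * Real.sin (Real.pi * (x / 2)) * Real.cos (Real.pi / 2 * x) := by
    rw [show Real.pi / 2 * x = Real.pi * (x / 2) by ring, ← Real.sin_two_mul]
    ring_nf
  rw [hdouble] at hreflect
  refine mul_right_cancel₀ hsin ?_
  linear_combination hreflect / 2 - hreflect_half

lemma cos_pi_div_two_mul_pos (hx : |x| < 1) : 0 < Real.cos (Real.pi / 2 * x) := by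
  obtain ⟨hx₁, hx₂⟩ := abs_lt.1 hx
  exact Real.cos_pos_of_mem_Ioo ⟨by nlinarith [Real.pi_pos], by nlinarith [Real.pi_pos]⟩

lemma log_cos_pi_div_two_mul (hx : |x| < 1) :
    Real.log (Real.cos (Real.pi / 2 * x)) = logGammaTail (x / 2) + logGammaTail (-x / 2) -
      (logGammaTail x + logGammaTail (-x)) := by
  obtain ⟨hx₁, hx₂⟩ := abs_lt.1 hx
  have hΓ {y : ℝ} (hy : -1 < y) : Real.Gamma (1 + y) ≠ 0 :=
    (Real.Gamma_pos_of_pos (by linarith)).ne'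
  have hΓ' {y : ℝ} (hy : y < 1) : Real.Gamma (1 - y) ≠ 0 :=
    (Real.Gamma_pos_of_pos (by linarith)).ne'
  have hlog := congrArg Real.log (Gamma_one_add_mul_Gamma_one_sub_mul_cos hx)
  rw [Real.log_mul (mul_ne_zero (hΓ hx₁) (hΓ' hx₂)) (cos_pi_div_two_mul_pos hx).ne',
    Real.log_mul (hΓ hx₁) (hΓ' hx₂),
    Real.log_mul (hΓ (by linarith)) (hΓ' (by linarith))] at hlog
  simp only [logGammaTail, neg_div, sub_neg_eq_add]
  linear_combination hlog

lemma hasSum_log_cos_pi_div_two_mul (hx : |x| < 1) :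
    HasSum (fun n : ℕ ↦ -(zetaR (n + 2 : ℕ) / ((n + 2 : ℕ) : ℝ) * (1 + (-1) ^ (n + 2)) *
      (1 - (1 / 2) ^ (n + 2)) * x ^ (n + 2))) (Real.log (Real.cos (Real.pi / 2 * x))) := by
  have hhalf : |x / 2| < 1 := by
    rw [abs_div, abs_two]
    linarith
  have hneg {y : ℝ} (hy : |y| < 1) := hasSum_logGammaTail (x := -y) (by rwa [abs_neg])
  rw [log_cos_pi_div_two_mul hx]
  refine (((hasSum_logGammaTail hhalf).add
    (neg_div 2 x ▸ hneg hhalf)).sub ((hasSum_logGammaTail hx).add (hneg hx))).congr_fun fun n ↦ ?_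
  rw [neg_div, neg_pow x, neg_pow (x / 2), div_eq_mul_one_div x, mul_pow]
  ring

end LogGammaTail

section PowerSeries

variable {𝕜 : Type*} [NontriviallyNormedField 𝕜] {f : 𝕜 → 𝕜} {a : ℕ → 𝕜}

lemma hasFPowerSeriesAt_ofScalars_of_eventually_hasSum
    (h : ∀ᶠ z in 𝓝 0, HasSum (fun n ↦ a n * z ^ n) (f z)) :
    HasFPowerSeriesAt f (FormalMultilinearSeries.ofScalars 𝕜 a) 0 := by
  rw [hasFPowerSeriesAt_iff]
  simpa [FormalMultilinearSeries.coeff_ofScalars, mul_comm] using h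

lemma iteratedDeriv_zero_of_eventually_hasSum [CompleteSpace 𝕜] [CharZero 𝕜]
    (h : ∀ᶠ z in 𝓝 0, HasSum (fun n ↦ a n * z ^ n) (f z)) (n : ℕ) :
    iteratedDeriv n f 0 = n.factorial * a n := by
  have hseries := hasFPowerSeriesAt_ofScalars_of_eventually_hasSum h
  have heq := hseries.analyticAt.hasFPowerSeriesAt.eq_formalMultilinearSeries hseries
  have hcoeff := congrFun (FormalMultilinearSeries.ofScalars_series_injective 𝕜 𝕜 heq) n
  rw [← hcoeff, mul_div_cancel₀ _ (Nat.cast_ne_zero.2 n.factorial_ne_zero)]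

end PowerSeries

/-- The cumulant generating function of `log |X|` for `X` strictly stable with parameters
`(ν, θ, τ)`, an analytic germ at `0`: for small `s > 0` it is `log E|X|^s`. -/
noncomputable def stableCgf (ν θ τ s : ℝ) : ℝ :=
  τ * s + logGammaTail (√ν * s) - logGammaTail s +
    (Real.log (Real.cos (Real.pi / 2 * (θ * s))) - Real.log (Real.cos (Real.pi / 2 * s)))

/-- The cumulants of `log |X|` for `X` strictly stable with parameters `(ν, θ, τ)`, that is,
the Taylor coefficients at `0` of `stableCgf`, up to factorials. -/
noncomputable def stableCumulant (ν θ τ : ℝ) : ℕ → ℝ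
  | 0 => 0
  | 1 => τ
  | n + 2 => (n + 1).factorial * zetaR (n + 2 : ℕ) *
      (√ν ^ (n + 2) - 1 + (1 + (-1) ^ (n + 2)) * (1 - (1 / 2) ^ (n + 2)) * (1 - θ ^ (n + 2)))

section StableCgf

variable {ν θ τ s : ℝ}

lemma stableCumulant_one : stableCumulant ν θ τ 1 = τ := rfl

lemma stableCumulant_two (hν : 0 ≤ ν) :
    stableCumulant ν θ τ 2 = Real.pi ^ 2 / 4 * (1 - θ ^ 2) + Real.pi ^ 2 / 6 * (ν - 1) := by
  simp only [stableCumulant, Nat.factorial, zero_add, Nat.cast_ofNat, zetaR_two, Real.sq_sqrt hν]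
  push_cast
  ring

lemma stableCumulant_three :
    stableCumulant ν θ τ 3 = 2 * zetaR 3 * (√ν ^ 3 - 1) := by
  norm_num [stableCumulant, Nat.factorial]

lemma stableCumulant_four (hν : 0 ≤ ν) :
    stableCumulant ν θ τ 4 =
      Real.pi ^ 4 * ((1 - θ ^ 4) / 8 + (ν ^ 2 - 1) / 15) := by
  have hsqrt : √ν ^ 4 = ν ^ 2 := by rw [show 4 = 2 * 2 from rfl, pow_mul, Real.sq_sqrt hν]
  simp only [stableCumulant, Nat.factorial, Nat.reduceAdd, Nat.cast_ofNat, zetaR_four, hsqrt]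
  push_cast
  ring

lemma stableCgf_zero : stableCgf ν θ τ 0 = 0 := by simp [stableCgf]

lemma hasSum_stableCgf (hθ : |θ| ≤ 1) (hs : |s| < 1) (hνs : |√ν * s| < 1) :
    HasSum (fun n ↦ stableCumulant ν θ τ n / n.factorial * s ^ n) (stableCgf ν θ τ s) := by
  have hθs : |θ * s| < 1 := by
    rw [abs_mul]
    exact (mul_le_of_le_one_left (abs_nonneg s) hθ).trans_lt hs
  have htail := ((hasSum_logGammaTail hνs).sub (hasSum_logGammaTail hs)).add
    ((hasSum_log_cos_pi_div_two_mul hθs).sub (hasSum_log_cos_pi_div_two_mul hs))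
  refine (hasSum_nat_add_iff' 2).1 ?_
  have hsub : stableCgf ν θ τ s -
      ∑ n ∈ Finset.range 2, stableCumulant ν θ τ n / n.factorial * s ^ n =
      logGammaTail (√ν * s) - logGammaTail s +
        (Real.log (Real.cos (Real.pi / 2 * (θ * s))) - Real.log (Real.cos (Real.pi / 2 * s))) := by
    simp only [stableCgf, stableCumulant, Finset.sum_range_succ, Finset.sum_range_zero,
      Nat.factorial, Nat.cast_one, div_one, pow_one]
    ring
  rw [hsub]
  refine htail.congr_fun fun n ↦ ?_
  have hfactorial : ((n + 2).factorial : ℝ) = (n + 2 : ℕ) * (n + 1).factorial := by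
    rw [Nat.factorial_succ, Nat.cast_mul]
  simp only [stableCumulant, hfactorial, mul_pow]
  field_simp
  ring

lemma eventually_hasSum_stableCgf (hθ : |θ| ≤ 1) :
    ∀ᶠ s in 𝓝 0,
      HasSum (fun n ↦ stableCumulant ν θ τ n / n.factorial * s ^ n) (stableCgf ν θ τ s) := by
  have hs : ∀ᶠ s : ℝ in 𝓝 0, |s| < 1 :=
    (by fun_prop : Continuous fun s : ℝ ↦ |s|).continuousAt.eventually_lt_const (by simp)
  have hνs : ∀ᶠ s : ℝ in 𝓝 0, |√ν * s| < 1 :=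
    (by fun_prop : Continuous fun s : ℝ ↦ |√ν * s|).continuousAt.eventually_lt_const (by simp)
  filter_upwards [hs, hνs] with s using hasSum_stableCgf hθ

lemma analyticAt_stableCgf (hθ : |θ| ≤ 1) : AnalyticAt ℝ (stableCgf ν θ τ) 0 :=
  (hasFPowerSeriesAt_ofScalars_of_eventually_hasSum (eventually_hasSum_stableCgf hθ)).analyticAt

lemma iteratedDeriv_stableCgf_zero (hθ : |θ| ≤ 1) (n : ℕ) :
    iteratedDeriv n (stableCgf ν θ τ) 0 = stableCumulant ν θ τ n := by
  rw [iteratedDeriv_zero_of_eventually_hasSum (eventually_hasSum_stableCgf hθ),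
    mul_div_cancel₀ _ (Nat.cast_ne_zero.2 n.factorial_ne_zero)]

end StableCgf

section MomentsAndCumulants

variable {f : ℝ → ℝ} {x : ℝ} {n : ℕ}

lemma iteratedDeriv_succ_exp_comp (hf : ContDiffAt ℝ (n + 1) f x) :
    iteratedDeriv (n + 1) (fun x ↦ Real.exp (f x)) x =
      ∑ i ∈ Finset.range (n + 1), n.choose i * iteratedDeriv i (fun x ↦ Real.exp (f x)) x *
        iteratedDeriv (n + 1 - i) f x := by
  have hderiv : deriv (fun x ↦ Real.exp (f x)) =ᶠ[𝓝 x] (fun x ↦ Real.exp (f x)) * deriv f := by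
    filter_upwards [hf.eventually (by simp)] with y hy
    exact deriv_exp (hy.differentiableAt (by simp))
  have hexp : ContDiffAt ℝ n (fun x ↦ Real.exp (f x)) x := (hf.of_le (by simp)).exp
  rw [iteratedDeriv_succ', hderiv.iteratedDeriv_eq, iteratedDeriv_mul hexp (hf.derivWithin le_rfl)]
  refine Finset.sum_congr rfl fun i hi ↦ ?_
  rw [← iteratedDeriv_succ', ← Nat.sub_add_comm (Finset.mem_range_succ_iff.1 hi)]

lemma iteratedDeriv_four_exp_comp (hf : ContDiffAt ℝ 4 f x) :
    iteratedDeriv 4 (fun x ↦ Real.exp (f x)) x =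
      Real.exp (f x) * (iteratedDeriv 4 f x + 4 * iteratedDeriv 3 f x * iteratedDeriv 1 f x +
        3 * iteratedDeriv 2 f x ^ 2 + 6 * iteratedDeriv 2 f x * iteratedDeriv 1 f x ^ 2 +
        iteratedDeriv 1 f x ^ 4) := by
  have h₁ := iteratedDeriv_succ_exp_comp (n := 0) (hf.of_le (by norm_num))
  have h₂ := iteratedDeriv_succ_exp_comp (n := 1) (hf.of_le (by norm_num))
  have h₃ := iteratedDeriv_succ_exp_comp (n := 2) (hf.of_le (by norm_num))
  have h₄ := iteratedDeriv_succ_exp_comp (n := 3) (hf.of_le (by norm_num))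
  simp only [Finset.sum_range_succ, Finset.sum_range_zero, iteratedDeriv_zero, Nat.reduceAdd,
    Nat.reduceSub, zero_add, Nat.choose_zero_right, Nat.choose_self, Nat.choose_one_right,
    Nat.choose_succ_self_right, Nat.cast_one, Nat.cast_ofNat, one_mul] at h₁ h₂ h₃ h₄
  rw [h₄, h₃, h₂, h₁]
  ring

end MomentsAndCumulants

section OneSidedMoments

variable {Ω : Type*} {mΩ : MeasurableSpace Ω} {μ : Measure Ω} {Y : Ω → ℝ} {f : ℝ → ℝ} {t : ℝ}
  {n : ℕ}

lemma mem_interior_integrableExpSet_of_integrable_exp_mul [IsFiniteMeasure μ] {s : ℝ} (hs : 0 < s)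
    (hst : s < t) (ht : Integrable (fun ω ↦ Real.exp (t * Y ω)) μ) :
    s ∈ interior (integrableExpSet Y μ) := by
  refine interior_mono (s := Ioo 0 t) (fun r hr ↦ ?_) (by simpa using ⟨hs, hst⟩)
  exact integrable_exp_mul_of_nonneg_of_le ht hr.1.le hr.2.le

lemma tendsto_integral_pow_mul_exp_nhdsGT_zero [IsFiniteMeasure μ]
    (hY : Integrable (fun ω ↦ Y ω ^ n) μ) (ht₀ : 0 < t)
    (ht : Integrable (fun ω ↦ Real.exp (t * Y ω)) μ) :
    Tendsto (fun s ↦ ∫ ω, Y ω ^ n * Real.exp (s * Y ω) ∂μ) (𝓝[>] 0) (𝓝 (∫ ω, Y ω ^ n ∂μ)) := by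
  have hmem := mem_interior_integrableExpSet_of_integrable_exp_mul (half_pos ht₀)
    (half_lt_self ht₀) ht
  have hYm : AEMeasurable Y μ := aemeasurable_of_mem_interior_integrableExpSet hmem
  refine tendsto_integral_filter_of_dominated_convergence
    (fun ω ↦ |Y ω| ^ n + |Y ω| ^ n * Real.exp (t / 2 * Y ω))
    (.of_forall fun s ↦ AEMeasurable.aestronglyMeasurable (by fun_prop)) ?_
    ((hY.abs.congr (.of_forall fun ω ↦ abs_pow _ _)).add
      (integrable_pow_abs_mul_exp_of_mem_interior_integrableExpSet hmem n)) ?_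
  · filter_upwards [Ioo_mem_nhdsGT (half_pos ht₀)] with s hs
    refine .of_forall fun ω ↦ ?_
    rw [norm_mul, norm_pow, Real.norm_eq_abs, Real.norm_of_nonneg (Real.exp_nonneg _),
      ← mul_one_add]
    gcongr
    rcases le_total (Y ω) 0 with h | h
    · exact (Real.exp_le_one_iff.2 (mul_nonpos_of_nonneg_of_nonpos hs.1.le h)).trans
        (le_add_of_nonneg_right (Real.exp_nonneg _))
    · exact (Real.exp_le_exp.2 (mul_le_mul_of_nonneg_right hs.2.le h)).trans
        (le_add_of_nonneg_left zero_le_one)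
  · refine .of_forall fun ω ↦ ?_
    have hcont : Continuous fun s ↦ Y ω ^ n * Real.exp (s * Y ω) := by fun_prop
    exact (hcont.tendsto' 0 _ (by simp)).mono_left nhdsWithin_le_nhds

lemma integral_pow_eq_iteratedDeriv_of_mgf_eventuallyEq [IsFiniteMeasure μ]
    (hY : Integrable (fun ω ↦ Y ω ^ n) μ) (ht₀ : 0 < t)
    (ht : Integrable (fun ω ↦ Real.exp (t * Y ω)) μ) (hf : ContDiffAt ℝ n f 0)
    (hmgf : mgf Y μ =ᶠ[𝓝[>] 0] f) :
    ∫ ω, Y ω ^ n ∂μ = iteratedDeriv n f 0 := by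
  refine tendsto_nhds_unique (tendsto_integral_pow_mul_exp_nhdsGT_zero hY ht₀ ht) ?_
  have hcont : ContinuousAt (iteratedDeriv n f) 0 := by
    rw [iteratedDeriv_eq_equiv_comp]
    exact (LinearIsometryEquiv.continuous _).continuousAt.comp
      (hf.iteratedFDeriv_right (m := 0) (by simp)).continuousAt
  refine (hcont.tendsto.mono_left nhdsWithin_le_nhds).congr' ?_
  filter_upwards [eventually_eventually_nhdsWithin.2 hmgf, Ioo_mem_nhdsGT ht₀] with s hs hst
  rw [nhdsWithin_eq_nhds.2 (Ioi_mem_nhds hst.1)] at hs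
  rw [← EventuallyEq.iteratedDeriv_eq n hs, iteratedDeriv_mgf
    (mem_interior_integrableExpSet_of_integrable_exp_mul hst.1 hst.2 ht)]

end OneSidedMoments

section StrictlyStable

variable {ν θ τ s : ℝ}

lemma Gamma_mul_cos_mul_exp_stableCgf (hθ : |θ| ≤ 1) (hs : |s| < 1) (hνs : √ν * s < 1) :
    Real.Gamma (1 - s) * Real.cos (Real.pi / 2 * s) * Real.exp (stableCgf ν θ τ s) =
      Real.Gamma (1 - √ν * s) *
        (Real.exp (τ * s + Real.eulerMascheroniConstant * (1 - √ν) * s) *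
          Real.cos (Real.pi / 2 * (θ * s))) := by
  have hθs : |θ * s| < 1 := by
    rw [abs_mul]
    exact (mul_le_of_le_one_left (abs_nonneg s) hθ).trans_lt hs
  have hΓ := (Real.Gamma_pos_of_pos (sub_pos.2 (abs_lt.1 hs).2)).ne'
  have hcos := (cos_pi_div_two_mul_pos hs).ne'
  have hexp : Real.exp (τ * s + Real.eulerMascheroniConstant * (1 - √ν) * s) =
      Real.exp (τ * s) * Real.exp (-(Real.eulerMascheroniConstant * (√ν * s))) /
        Real.exp (-(Real.eulerMascheroniConstant * s)) := by
    rw [← Real.exp_add, ← Real.exp_sub]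
    ring_nf
  rw [stableCgf, Real.exp_add, Real.exp_sub, Real.exp_add, Real.exp_sub,
    exp_logGammaTail hνs, exp_logGammaTail (abs_lt.1 hs).2,
    Real.exp_log (cos_pi_div_two_mul_pos hθs), Real.exp_log (cos_pi_div_two_mul_pos hs), hexp]
  generalize Real.cos (Real.pi / 2 * s) = c at hcos ⊢
  field_simp

/-- The complex number `z` for which the characteristic function of a strictly stable variable
with parameters `(ν, θ, τ)` is `k ↦ exp (-(exp z * k ^ (√ν)⁻¹))` on `(0, ∞)`. -/
noncomputable def stableLogScale (ν θ τ : ℝ) : ℂ :=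
  (((√ν)⁻¹ * τ + Real.eulerMascheroniConstant * ((√ν)⁻¹ - 1) : ℝ) : ℂ) +
    ((-((√ν)⁻¹ * (Real.pi / 2 * θ)) : ℝ) : ℂ) * Complex.I

lemma abs_im_stableLogScale_le (hν : 0 < ν) (hθ : |θ| ≤ min 1 (2 * √ν - 1)) :
    |(stableLogScale ν θ τ).im| ≤ Real.pi / 2 := by
  have hθν : |θ| ≤ √ν := by
    linarith [hθ.trans (min_le_left _ _), hθ.trans (min_le_right _ _)]
  have him : (stableLogScale ν θ τ).im = -(Real.pi / 2 * ((√ν)⁻¹ * θ)) := by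
    rw [stableLogScale, Complex.add_im, Complex.ofReal_im, Complex.im_ofReal_mul, Complex.I_im]
    ring
  have hsqrt := Real.sqrt_pos.2 hν
  rw [him, abs_neg, abs_mul, abs_mul, abs_of_pos Real.pi_div_two_pos, abs_inv, abs_of_pos hsqrt]
  exact mul_le_of_le_one_right Real.pi_div_two_pos.le ((inv_mul_le_one₀ hsqrt).2 hθν)

lemma re_exp_stableLogScale_nonneg (hν : 0 < ν) (hθ : |θ| ≤ min 1 (2 * √ν - 1)) :
    0 ≤ (Complex.exp (stableLogScale ν θ τ)).re := by
  rw [Complex.exp_re]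
  exact mul_nonneg (Real.exp_nonneg _)
    (Real.cos_nonneg_of_mem_Icc (abs_le.1 (abs_im_stableLogScale_le hν hθ)))

lemma re_exp_stableLogScale_cpow (hν : 0 < ν) (hθ : |θ| ≤ min 1 (2 * √ν - 1)) (s : ℝ) :
    (Complex.exp (stableLogScale ν θ τ) ^ ((√ν * s : ℝ) : ℂ)).re =
      Real.exp (τ * s + Real.eulerMascheroniConstant * (1 - √ν) * s) *
        Real.cos (Real.pi / 2 * (θ * s)) := by
  obtain ⟨him₁, him₂⟩ := abs_le.1 (abs_im_stableLogScale_le (τ := τ) hν hθ)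
  have hsqrt := (Real.sqrt_pos.2 hν).ne'
  have hmul : stableLogScale ν θ τ * (√ν * s : ℝ) =
      ((τ * s + Real.eulerMascheroniConstant * (1 - √ν) * s : ℝ) : ℂ) +
        ((-(Real.pi / 2 * (θ * s)) : ℝ) : ℂ) * Complex.I := by
    have hsqrt' : (√ν : ℂ) ≠ 0 := Complex.ofReal_ne_zero.2 hsqrt
    rw [stableLogScale]
    push_cast
    field_simp
  rw [Complex.cpow_def_of_ne_zero (Complex.exp_ne_zero _), Complex.log_exp
    (by linarith [Real.pi_pos]) (by linarith [Real.pi_pos]), hmul, Complex.exp_re]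
  simp

namespace IsStrictlyStable

variable {Ω : Type*} [MeasureSpace Ω] {X : Ω → ℝ}

lemma measurable (hX : IsStrictlyStable X ν θ τ) : Measurable X := hX.1

lemma nu_pos (hX : IsStrictlyStable X ν θ τ) : 0 < ν :=
  (one_div_pos.2 four_pos).trans_le hX.2.1

lemma abs_theta_le_min (hX : IsStrictlyStable X ν θ τ) : |θ| ≤ min 1 (2 * √ν - 1) := hX.2.2.1

lemma abs_theta_le_one (hX : IsStrictlyStable X ν θ τ) : |θ| ≤ 1 :=
  hX.abs_theta_le_min.trans (min_le_left _ _)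

lemma integrable_log_abs_pow (hX : IsStrictlyStable X ν θ τ) (n : ℕ) :
    Integrable (fun ω ↦ Real.log |X ω| ^ n) := by
  have hlog : Measurable fun ω ↦ Real.log |X ω| := hX.measurable.norm.log
  refine (hX.2.2.2.2.1 n).mono' (hlog.pow_const n).aestronglyMeasurable (.of_forall fun ω ↦ ?_)
  rw [norm_pow, Real.norm_eq_abs]

lemma abs_rpow_ae_eq (hX : IsStrictlyStable X ν θ τ) (s : ℝ) :
    (fun ω ↦ |X ω| ^ s) =ᵐ[ℙ] fun ω ↦ Real.exp (s * Real.log |X ω|) := by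
  have hne : ∀ᵐ ω, X ω ≠ 0 := ae_iff.2 (by simpa using hX.2.2.2.1)
  filter_upwards [hne] with ω hω
  rw [Real.rpow_def_of_pos (abs_pos.2 hω), mul_comm]

lemma charFun_map (hX : IsStrictlyStable X ν θ τ) {k : ℝ} (hk : 0 < k) :
    charFun (Measure.map X ℙ) k =
      Complex.exp (-(Complex.exp (stableLogScale ν θ τ) * (k ^ (√ν)⁻¹ : ℝ))) := by
  have hsqrt : ν ^ (-(1 / 2) : ℝ) = (√ν)⁻¹ := by
    rw [Real.rpow_neg hX.nu_pos.le, ← Real.sqrt_eq_rpow]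
  have hcomm : (∫ ω, Complex.exp (k * X ω * Complex.I)) =
      ∫ ω, Complex.exp (Complex.I * k * X ω) := by
    congr with ω
    ring_nf
  rw [charFun_apply_real, integral_map hX.measurable.aemeasurable
    (Measurable.aestronglyMeasurable (by fun_prop)), hcomm, hX.2.2.2.2.2 k hk.ne', hsqrt,
    Real.sign_of_pos hk, abs_of_pos hk, Real.rpow_def_of_pos hk, Complex.ofReal_exp,
    ← Complex.exp_add, stableLogScale]
  push_cast
  ring_nf

variable [IsProbabilityMeasure (ℙ : Measure Ω)]

lemma integrable_exp_mul_log_abs (hX : IsStrictlyStable X ν θ τ) (hs₀ : 0 < s) (hs₁ : s < 1)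
    (hνs : s < (√ν)⁻¹) : Integrable (fun ω ↦ Real.exp (s * Real.log |X ω|)) := by
  have := Measure.isProbabilityMeasure_map (μ := ℙ) hX.measurable.aemeasurable
  refine Integrable.congr ?_ (hX.abs_rpow_ae_eq s)
  refine Integrable.comp_measurable (g := fun x ↦ |x| ^ s) ?_ hX.measurable
  exact integrable_abs_rpow_of_charFun_eq_exp_neg_mul_rpow
    (re_exp_stableLogScale_nonneg hX.nu_pos hX.abs_theta_le_min) hs₀ hs₁ hνs fun _ ↦ hX.charFun_map

lemma mgf_log_abs (hX : IsStrictlyStable X ν θ τ) (hs₀ : 0 < s) (hs₁ : s < 1)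
    (hνs : s < (√ν)⁻¹) :
    mgf (fun ω ↦ Real.log |X ω|) ℙ s = Real.exp (stableCgf ν θ τ s) := by
  have := Measure.isProbabilityMeasure_map (μ := ℙ) hX.measurable.aemeasurable
  have hs : |s| < 1 := abs_lt.2 ⟨by linarith, hs₁⟩
  have hνs' : √ν * s < 1 := (lt_inv_mul_iff₀ (Real.sqrt_pos.2 hX.nu_pos)).1 (by rwa [mul_one])
  have hmoment := integral_abs_rpow_of_charFun_eq_exp_neg_mul_rpow
    (re_exp_stableLogScale_nonneg hX.nu_pos hX.abs_theta_le_min) hs₀ hs₁ hνs fun _ ↦ hX.charFun_map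
  rw [div_inv_eq_mul, mul_comm s, re_exp_stableLogScale_cpow hX.nu_pos hX.abs_theta_le_min,
    ← Gamma_mul_cos_mul_exp_stableCgf hX.abs_theta_le_one hs hνs', integral_map
    hX.measurable.aemeasurable (Measurable.aestronglyMeasurable (by fun_prop)),
    integral_congr_ae (hX.abs_rpow_ae_eq s)] at hmoment
  exact mul_left_cancel₀ (mul_ne_zero (Real.Gamma_pos_of_pos (sub_pos.2 hs₁)).ne'
    (cos_pi_div_two_mul_pos hs).ne') hmoment

lemma integral_log_abs_pow (hX : IsStrictlyStable X ν θ τ) (n : ℕ) :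
    ∫ ω, Real.log |X ω| ^ n = iteratedDeriv n (fun s ↦ Real.exp (stableCgf ν θ τ s)) 0 := by
  have hinv : 0 < (√ν)⁻¹ := inv_pos.2 (Real.sqrt_pos.2 hX.nu_pos)
  obtain ⟨t, ht₀, ht⟩ := exists_between (lt_min one_pos hinv)
  obtain ⟨ht₁, htν⟩ := lt_min_iff.1 ht
  refine integral_pow_eq_iteratedDeriv_of_mgf_eventuallyEq (hX.integrable_log_abs_pow n) ht₀
    (hX.integrable_exp_mul_log_abs ht₀ ht₁ htν)
    (analyticAt_stableCgf hX.abs_theta_le_one).contDiffAt.exp ?_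
  filter_upwards [Ioo_mem_nhdsGT one_pos, Ioo_mem_nhdsGT hinv] with s hs hνs
  exact hX.mgf_log_abs hs.1 hs.2 hνs.2

end IsStrictlyStable

end StrictlyStable

theorem fourth_log_moment_of_strictlyStable {Ω : Type*} [MeasureSpace Ω]
    [IsProbabilityMeasure (ℙ : Measure Ω)] (X : Ω → ℝ) (ν θ τ : ℝ)
    (hX : IsStrictlyStable X ν θ τ)
    (DV : ℝ) (hDV : DV = Real.pi ^ 2 / 4 * (1 - θ ^ 2) + Real.pi ^ 2 / 6 * (ν - 1)) :
    (∫ ω, (Real.log |X ω|) ^ 4) =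
      τ ^ 4 + 6 * τ ^ 2 * DV + 8 * τ * zetaR 3 * (ν ^ ((3 : ℝ) / 2) - 1) + 3 * DV ^ 2
        + Real.pi ^ 4 * ((1 - θ ^ 4) / 8 + (ν ^ 2 - 1) / 15) := by
  have hν : 0 ≤ ν := hX.nu_pos.le
  have hDV' : stableCumulant ν θ τ 2 = DV := (stableCumulant_two hν).trans hDV.symm
  have hν_pow : ν ^ ((3 : ℝ) / 2) = √ν ^ 3 := by
    rw [Real.rpow_div_two_eq_sqrt 3 hν, Real.rpow_ofNat]
  have hmoment := hX.integral_log_abs_pow 4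
  rw [iteratedDeriv_four_exp_comp (analyticAt_stableCgf hX.abs_theta_le_one).contDiffAt,
    stableCgf_zero, Real.exp_zero, one_mul] at hmoment
  simp only [iteratedDeriv_stableCgf_zero hX.abs_theta_le_one] at hmoment
  rw [hmoment, hDV', stableCumulant_one, stableCumulant_three, stableCumulant_four hν, hν_pow]
  ring
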